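/- arXiv:2305.08427 — 2 statements merged into one kernel-verified Lean document; each statement's English description precedes it below -/
import Mathlib

section
/- Fix 0 ≤ q₀ < q̃₀ and let (q, p), respectively (q̃, p̃), be the global solution of (HS) with initial datum (q₀, 2), respectively (q̃₀, 2). Then q(t) < q̃(t) for all t ≥ 0. -/
open Real Set Filter MeasureTheory
open scoped Topology

/-- The potential `g` from the Hamiltonian `H(x,p) = p²/2 + g(x)`. -/
noncomputable def g (x : ℝ) : ℝ := if |x| ≤ 1 then 1 - (1 - x ^ 2) ^ 4 else 1

/-- The derivative of `g`. -/
noncomputable def g' (x : ℝ) : ℝ := if |x| ≤ 1 then 8 * x * (1 - x ^ 2) ^ 3 else 0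

/-- `(q, p)` is a (global) solution of the Hamiltonian system (HS): `q̇ = p`, `ṗ = -g'(q)`. -/
def IsHSSol (q p : ℝ → ℝ) : Prop :=
  (∀ t : ℝ, HasDerivAt q (p t) t) ∧ (∀ t : ℝ, HasDerivAt p (-(g' (q t))) t)

/-- `F` is the flow of (HS): `F t q₀ p₀ = (q t, p t)` for the solution with data `(q₀, p₀)`. -/
def IsHSFlow (F : ℝ → ℝ → ℝ → ℝ × ℝ) : Prop :=
  ∀ q₀ p₀ : ℝ,
    IsHSSol (fun t => (F t q₀ p₀).1) (fun t => (F t q₀ p₀).2) ∧ F 0 q₀ p₀ = (q₀, p₀)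

/-- The set `([0,∞) × {2}) ∪ ({0} × (0,2])`, codomain of the map `Δ`. -/
def Dset : Set (ℝ × ℝ) := (Ici (0:ℝ) ×ˢ ({2} : Set ℝ)) ∪ ({(0:ℝ)} ×ˢ Ioc (0:ℝ) 2)

/-- `T` is the smallest positive period of `q`. -/
def IsSmallestPeriod (q : ℝ → ℝ) (T : ℝ) : Prop :=
  0 < T ∧ Function.Periodic q T ∧ ∀ T' : ℝ, 0 < T' → Function.Periodic q T' → T ≤ T'

/-- `T` is the period map `𝒯`, assigning to `p₀ ∈ (0, √2)` the smallest positive period of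
the `q`-component of the solution of (HS) with initial datum `(0, p₀)`. -/
def IsPeriodMap (F : ℝ → ℝ → ℝ → ℝ × ℝ) (T : ℝ → ℝ) : Prop :=
  ∀ p₀ ∈ Ioo (0:ℝ) (Real.sqrt 2), IsSmallestPeriod (fun t => (F t 0 p₀).1) (T p₀)

/-- `Δ` associates to `(t,x)` the datum in `Dset` whose orbit stays positive on `(0,t)`
and reaches `x` at time `t`. -/
def IsDeltaMap (F : ℝ → ℝ → ℝ → ℝ × ℝ) (Δ : ℝ → ℝ → ℝ × ℝ) : Prop :=
  ∀ t x : ℝ, 0 < t → 0 < x →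
    Δ t x ∈ Dset ∧ (F t (Δ t x).1 (Δ t x).2).1 = x ∧
      ∀ s ∈ Ioo (0:ℝ) t, 0 < (F s (Δ t x).1 (Δ t x).2).1

/-- The solution `u` of the conservation law built from the flow `F` and the map `Δ`
(extended by `0` at `x = 0`). -/
noncomputable def usol (F : ℝ → ℝ → ℝ → ℝ × ℝ) (Δ : ℝ → ℝ → ℝ × ℝ) (t x : ℝ) : ℝ :=
  if 0 < x then (F t (Δ t x).1 (Δ t x).2).2
  else if x < 0 then -(F t (Δ t (-x)).1 (Δ t (-x)).2).2
  else 0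


lemma aux_max (y : ℝ) : HasDerivAt (fun y : ℝ => (max y 0) ^ 4) (4 * (max y 0) ^ 3) y := by
  rcases lt_trichotomy y 0 with h | h | h
  · rw [max_eq_right h.le]
    have : (fun y : ℝ => (max y 0) ^ 4) =ᶠ[𝓝 y] fun _ => 0 := by
      filter_upwards [gt_mem_nhds h] with z hz
      rw [max_eq_right hz.le]; norm_num
    simpa using (hasDerivAt_const y (0:ℝ)).congr_of_eventuallyEq this
  · subst h
    have h1 : HasDerivWithinAt (fun y : ℝ => (max y 0) ^ 4) 0 (Iic 0) 0 := by
      refine (hasDerivWithinAt_const (0:ℝ) (Iic 0) (0:ℝ)).congr ?_ ?_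
      · intro z hz
        simp only [mem_Iic] at hz
        simp [max_eq_right hz]
      · simp
    have h2 : HasDerivWithinAt (fun y : ℝ => (max y 0) ^ 4) 0 (Ici 0) 0 := by
      have h3 : HasDerivWithinAt (fun y : ℝ => y ^ 4) 0 (Ici 0) 0 := by
        simpa using (hasDerivAt_pow 4 (0:ℝ)).hasDerivWithinAt
      refine h3.congr ?_ ?_
      · intro z hz
        simp only [mem_Ici] at hz
        simp [max_eq_left hz]
      · simp
    have := h1.union h2
    rw [Iic_union_Ici, hasDerivWithinAt_univ] at this
    simpa using this
  · rw [max_eq_left h.le]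
    have : (fun y : ℝ => (max y 0) ^ 4) =ᶠ[𝓝 y] fun y => y ^ 4 := by
      filter_upwards [lt_mem_nhds h] with z hz
      rw [max_eq_left hz.le]
    simpa using (hasDerivAt_pow 4 y).congr_of_eventuallyEq this

lemma g_eq (x : ℝ) : g x = 1 - (max (1 - x ^ 2) 0) ^ 4 := by
  unfold g
  split_ifs with h
  · rw [max_eq_left]
    have := (sq_le_one_iff_abs_le_one x).2 h
    linarith
  · rw [max_eq_right]
    · norm_num
    · have := (one_lt_sq_iff_one_lt_abs x).2 (not_le.1 h)
      linarith

lemma g'_eq (x : ℝ) : g' x = 8 * x * (max (1 - x ^ 2) 0) ^ 3 := by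
  unfold g'
  split_ifs with h
  · rw [max_eq_left]
    have := (sq_le_one_iff_abs_le_one x).2 h
    linarith
  · rw [max_eq_right]
    · norm_num
    · have := (one_lt_sq_iff_one_lt_abs x).2 (not_le.1 h)
      linarith

lemma g_deriv (x : ℝ) : HasDerivAt g (g' x) x := by
  have h1 : HasDerivAt (fun x : ℝ => 1 - x ^ 2) (-(2 * x)) x := by
    simpa using (hasDerivAt_pow 2 x).const_sub 1
  have h2 := ((aux_max (1 - x ^ 2)).comp x h1).const_sub 1
  have h3 : g = fun x => 1 - ((fun y : ℝ => (max y 0) ^ 4) ∘ fun x : ℝ => 1 - x ^ 2) x := by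
    funext z; simp [g_eq]
  rw [h3, g'_eq]
  exact h2.congr_deriv (by ring)

lemma g_nonneg (x : ℝ) : 0 ≤ g x := by
  rw [g_eq]
  have : (max (1 - x ^ 2) 0) ^ 4 ≤ 1 :=
    pow_le_one₀ (le_max_right _ _) (max_le (by nlinarith [sq_nonneg x]) zero_le_one)
  linarith

lemma g_le_one (x : ℝ) : g x ≤ 1 := by
  rw [g_eq]
  have : 0 ≤ (max (1 - x ^ 2) 0) ^ 4 := pow_nonneg (le_max_right _ _) _
  linarith

lemma energy {q p : ℝ → ℝ} (h : IsHSSol q p) (t : ℝ) :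
    p t ^ 2 / 2 + g (q t) = p 0 ^ 2 / 2 + g (q 0) := by
  have hd : ∀ s, HasDerivAt (fun s => p s ^ 2 / 2 + g (q s)) 0 s := by
    intro s
    have h1 := ((h.2 s).pow 2).div_const 2
    have h2 := (g_deriv (q s)).comp s (h.1 s)
    have h3 := h1.add h2
    exact h3.congr_deriv (by simp; ring)
  exact is_const_of_deriv_eq_zero (fun s => (hd s).differentiableAt)
    (fun s => (hd s).deriv) t 0

lemma p_pos {q p : ℝ → ℝ} (h : IsHSSol q p) (h0 : p 0 = 2) (t : ℝ) (ht : 0 ≤ t) : 0 < p t := by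
  by_contra hn
  push Not at hn
  have hc : ContinuousOn p (Icc 0 t) := fun s _ => (h.2 s).continuousAt.continuousWithinAt
  obtain ⟨s, _, hs⟩ := intermediate_value_Icc' ht hc (show (0:ℝ) ∈ Icc (p t) (p 0) by
    rw [h0]; exact ⟨hn, by norm_num⟩)
  have := energy h s
  rw [hs, h0] at this
  have := g_le_one (q s)
  have := g_nonneg (q 0)
  linarith

lemma q_ge {q p : ℝ → ℝ} (h : IsHSSol q p) (h0 : p 0 = 2) (t : ℝ) (ht : 0 ≤ t) : q 0 ≤ q t := by
  have : MonotoneOn q (Ici 0) := by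
    refine monotoneOn_of_hasDerivWithinAt_nonneg (convex_Ici 0) (f' := p)
      (fun s _ => (h.1 s).continuousAt.continuousWithinAt)
      (fun s _ => (h.1 s).hasDerivWithinAt) ?_
    intro s hs
    exact (p_pos h h0 s (interior_subset hs)).le
  exact this self_mem_Ici ht ht

lemma g_one {x : ℝ} (hx : 1 ≤ x) : g x = 1 := by
  rw [g_eq, max_eq_right (by nlinarith)]; norm_num

lemma p_two {q p : ℝ → ℝ} (h : IsHSSol q p) (h0 : p 0 = 2) (h1 : 1 ≤ q 0) (t : ℝ)
    (ht : 0 ≤ t) : p t = 2 := by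
  have e := energy h t
  rw [g_one h1, g_one (h1.trans (q_ge h h0 t ht)), h0] at e
  have := p_pos h h0 t ht
  nlinarith

lemma g_lt {x y : ℝ} (hx : 0 ≤ x) (hx1 : x < 1) (hxy : x < y) : g x < g y := by
  rw [g_eq, g_eq]
  have h1 : max (1 - y ^ 2) 0 < max (1 - x ^ 2) 0 := by
    rw [max_eq_left (a := 1 - x ^ 2) (by nlinarith)]
    exact max_lt (by nlinarith) (by nlinarith)
  have := pow_lt_pow_left₀ h1 (le_max_right _ _) (n := 4) (by norm_num)
  linarith

/-- Lemma ce2: for `0 ≤ q₀ < q̃₀`, the solutions of (HS) with data `(q₀, 2)` and `(q̃₀, 2)`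
satisfy `q(t) < q̃(t)` for all `t ≥ 0`. -/
theorem stmt_2 (q₀ qt₀ : ℝ) (hq₀ : 0 ≤ q₀) (hlt : q₀ < qt₀)
    (q p qt pt : ℝ → ℝ)
    (hsol : IsHSSol q p) (hq0 : q 0 = q₀) (hp0 : p 0 = 2)
    (hsolt : IsHSSol qt pt) (hqt0 : qt 0 = qt₀) (hpt0 : pt 0 = 2) :
    ∀ t : ℝ, 0 ≤ t → q t < qt t := by
  subst hq0 hqt0
  intro t ht
  rcases lt_or_ge (q 0) 1 with h1 | h1
  · have key : ∀ s, 0 ≤ s → q s = qt s → p s < pt s := by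
      intro s hs he
      have e1 := energy hsol s
      have e2 := energy hsolt s
      rw [hp0, he] at e1
      rw [hpt0] at e2
      have := g_lt hq₀ h1 hlt
      have := p_pos hsolt hpt0 s hs
      nlinarith
    have hle : ∀ s, 0 ≤ s → q s ≤ qt s := by
      intro s hs
      refine image_le_of_deriv_right_lt_deriv_boundary (f := q) (f' := p) (a := 0) (b := s)
        (B := qt) (B' := pt)
        (fun s _ => (hsol.1 s).continuousAt.continuousWithinAt)
        (fun s _ => (hsol.1 s).hasDerivWithinAt) hlt.le (fun s => hsolt.1 s)
        (fun s hs he => key s hs.1 he) ⟨hs, le_rfl⟩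
    refine lt_of_le_of_ne (hle t ht) fun he => ?_
    have ht0 : 0 < t := by
      rcases ht.eq_or_lt with h | h
      · subst h; exact absurd he hlt.ne
      · exact h
    have hm : IsLocalMin (fun s => qt s - q s) t := by
      filter_upwards [lt_mem_nhds ht0] with s hs
      have := hle s hs.le
      linarith
    have := hm.hasDerivAt_eq_zero ((hsolt.1 t).sub (hsol.1 t))
    have := key t ht he
    linarith
  · have hm : MonotoneOn (fun s => qt s - q s) (Ici 0) := by
      refine monotoneOn_of_hasDerivWithinAt_nonneg (convex_Ici 0) (f' := fun s => pt s - p s)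
        (fun s _ => ((hsolt.1 s).sub (hsol.1 s)).continuousAt.continuousWithinAt)
        (fun s _ => ((hsolt.1 s).sub (hsol.1 s)).hasDerivWithinAt) ?_
      intro s hs
      have hs' : 0 ≤ s := interior_subset hs
      simp only [p_two hsol hp0 h1 s hs', p_two hsolt hpt0 (h1.trans hlt.le) s hs']
      norm_num
    have := hm self_mem_Ici ht ht
    simp only at this
    linarith
end

section
/- The period map 𝒯 : (0, √2) → (0, +∞), assigning to p₀ the smallest positive period of the q-component of the solution of (HS) starting from (0, p₀), is increasing and continuous, and 𝒯(p₀) → +∞ as p₀ → √2 from the left. -/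
open Real Set Filter MeasureTheory
open scoped Topology

noncomputable def uu (y : ℝ) : ℝ := √(√(1 - y ^ 2 / 2))
noncomputable def YY (y : ℝ) : ℝ := √(2 * (1 + uu y + uu y ^ 2 + uu y ^ 3))
noncomputable def WW (y : ℝ) : ℝ := YY y / (8 * uu y ^ 3)
noncomputable def hh (y : ℝ) : ℝ := y / YY y

lemma uu_nonneg (y : ℝ) : 0 ≤ uu y := Real.sqrt_nonneg _
lemma uu_pos {y : ℝ} (hy : y ^ 2 < 2) : 0 < uu y :=
  Real.sqrt_pos.2 (Real.sqrt_pos.2 (by linarith))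
lemma uu_sq (y : ℝ) : uu y ^ 2 = √(1 - y ^ 2 / 2) := Real.sq_sqrt (Real.sqrt_nonneg _)
lemma uu_four {y : ℝ} (hy : y ^ 2 < 2) : uu y ^ 4 = 1 - y ^ 2 / 2 := by
  have : uu y ^ 4 = (uu y ^ 2) ^ 2 := by ring
  rw [this, uu_sq, Real.sq_sqrt (by linarith)]
lemma uu_le_one (y : ℝ) : uu y ≤ 1 := by
  unfold uu
  rw [Real.sqrt_le_one, Real.sqrt_le_one]
  nlinarith [sq_nonneg y]
lemma uu_deriv {y : ℝ} (hy : y ^ 2 < 2) : HasDerivAt uu (-y / (4 * uu y ^ 3)) y := by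
  have h1 : HasDerivAt (fun y : ℝ => 1 - y ^ 2 / 2) (-y) y := by
    have := ((hasDerivAt_pow 2 y).div_const 2).const_sub 1
    exact this.congr_deriv (by norm_num)
  have h2 := (h1.sqrt (by nlinarith)).sqrt (Real.sqrt_pos.2 (by linarith)).ne'
  have hu := uu_pos hy
  refine HasDerivAt.congr_deriv (f := uu) h2 ?_
  rw [show √(√(1 - y ^ 2 / 2)) = uu y from rfl, ← uu_sq]
  field_simp
  norm_num
lemma YY_sq (y : ℝ) : YY y ^ 2 = 2 * (1 + uu y + uu y ^ 2 + uu y ^ 3) :=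
  Real.sq_sqrt (by have := uu_nonneg y; positivity)
lemma YY_pos (y : ℝ) : 0 < YY y := Real.sqrt_pos.2 (by have := uu_nonneg y; positivity)
lemma one_le_YY (y : ℝ) : 1 ≤ YY y := by
  have := uu_nonneg y
  apply Real.le_sqrt_of_sq_le
  nlinarith [pow_nonneg this 2, pow_nonneg this 3]
lemma WW_pos {y : ℝ} (hy : y ^ 2 < 2) : 0 < WW y := by
  have := uu_pos hy
  have := YY_pos y
  unfold WW; positivity
lemma WW_ge {y : ℝ} (hy : y ^ 2 < 2) : 1 / 8 ≤ WW y := by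
  have h1 := uu_pos hy
  have h2 := one_le_YY y
  have h3 : uu y ^ 3 ≤ 1 := pow_le_one₀ h1.le (uu_le_one y)
  unfold WW
  rw [div_le_div_iff₀ (by norm_num) (by positivity)]
  linarith
lemma WW_ge2 {y : ℝ} (hy : y ^ 2 < 2) : 1 / (8 * √(1 - y ^ 2 / 2)) ≤ WW y := by
  have h1 := uu_pos hy
  have h2 := one_le_YY y
  have h3 := uu_le_one y
  rw [← uu_sq]
  unfold WW
  have : uu y ^ 3 ≤ uu y ^ 2 := pow_le_pow_of_le_one h1.le h3 (by norm_num)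
  gcongr
lemma YY_deriv {y : ℝ} (hy : y ^ 2 < 2) :
    HasDerivAt YY ((1 + 2 * uu y + 3 * uu y ^ 2) * (-y / (4 * uu y ^ 3)) / YY y) y := by
  have h := uu_deriv hy
  have h1 := (((((h.const_add 1).add (h.pow 2)).add (h.pow 3)).const_mul 2).sqrt
    (by have := uu_nonneg y; simp only [Pi.add_apply, Pi.pow_apply]; positivity))
  have hY := YY_pos y
  refine HasDerivAt.congr_deriv (f := YY) h1 ?_
  rw [show √(2 * (((fun x => 1 + uu x) + uu ^ 2 + uu ^ 3) y)) = YY y from rfl]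
  have hu := uu_pos hy
  field_simp
  norm_num
  ring
lemma hh_deriv {y : ℝ} (hy : y ^ 2 < 2) : HasDerivAt hh (WW y) y := by
  have h1 := (hasDerivAt_id y).div (YY_deriv hy) (YY_pos y).ne'
  refine HasDerivAt.congr_deriv (f := hh) h1 ?_
  have hu := uu_pos hy
  have hY := YY_pos y
  have e4 := uu_four hy
  have eY := YY_sq y
  have ey : y ^ 2 = 2 * (1 - uu y ^ 4) := by linarith
  unfold WW
  simp only [id]
  have : YY y ^ 4 = (2 * (1 + uu y + uu y ^ 2 + uu y ^ 3)) ^ 2 := by rw [← eY]; ring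
  field_simp
  ring_nf
  ring_nf at this
  ring_nf at ey eY
  simp only [this, ey, eY]
  ring
lemma WW_lt {y z : ℝ} (hyz : y ^ 2 < z ^ 2) (hz : z ^ 2 < 2) : WW y < WW z := by
  have hu := uu_pos (hyz.trans hz)
  have hv := uu_pos hz
  have huv : uu z < uu y := by
    apply Real.sqrt_lt_sqrt (Real.sqrt_nonneg _)
    apply Real.sqrt_lt_sqrt <;> linarith
  have eY := YY_sq y
  have eZ := YY_sq z
  have pY := YY_pos y
  have pZ := YY_pos z
  unfold WW
  rw [div_lt_div_iff₀ (by positivity) (by positivity)]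
  apply lt_of_pow_lt_pow_left₀ 2 (by positivity)
  rw [mul_pow, mul_pow (YY z), eY, eZ]
  generalize uu y = u at *
  generalize uu z = v at *
  have a0 : v ^ 6 < u ^ 6 := by gcongr
  have a1 : u * v ^ 6 ≤ v * u ^ 6 := by
    have : v ^ 5 ≤ u ^ 5 := by gcongr
    nlinarith [mul_pos hu hv]
  have a2 : u ^ 2 * v ^ 6 ≤ v ^ 2 * u ^ 6 := by
    have : v ^ 4 ≤ u ^ 4 := by gcongr
    nlinarith [pow_pos (mul_pos hu hv) 2]
  have a3 : u ^ 3 * v ^ 6 ≤ v ^ 3 * u ^ 6 := by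
    have : v ^ 3 ≤ u ^ 3 := by gcongr
    nlinarith [pow_pos (mul_pos hu hv) 3]
  nlinarith
lemma WW_cont {y : ℝ} (hy : y ^ 2 < 2) : ContinuousAt WW y := by
  have hu := uu_pos hy
  exact (YY_deriv hy).continuousAt.div (((uu_deriv hy).continuousAt.pow 3).const_mul 8)
    (by positivity)
lemma g'_hh {y : ℝ} (hy : y ^ 2 < 2) : g' (hh y) * WW y = y := by
  have hu := uu_pos hy
  have hY := YY_pos y
  have eY := YY_sq y
  have e4 := uu_four hy
  have hs : hh y ^ 2 = 1 - uu y := by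
    unfold hh
    rw [div_pow, eY, div_eq_iff (by positivity)]
    linarith
  have h1 : |hh y| ≤ 1 := by
    rw [← sq_le_one_iff_abs_le_one, hs]; linarith
  rw [g', if_pos h1, hs]
  unfold hh WW
  field_simp
  ring

lemma g'_lip : ∃ K : NNReal, LipschitzWith K g' := by
  have h1 : ∃ K : NNReal, LipschitzOnWith K (fun x : ℝ => 8 * x * (1 - x ^ 2) ^ 3) (Icc (-1) 1) := by
    apply ContDiffOn.exists_lipschitzOnWith (n := 1) _ (by norm_num) (convex_Icc _ _) isCompact_Icc
    apply ContDiff.contDiffOn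
    fun_prop
  obtain ⟨K, hK⟩ := h1
  refine ⟨K, ?_⟩
  have h2 : LipschitzWith 1 (fun x : ℝ => ((projIcc (-1) 1 (by norm_num) x : Icc (-1:ℝ) 1) : ℝ)) := by
    have := (LipschitzWith.subtype_val _).comp (LipschitzWith.projIcc (by norm_num : (-1:ℝ) ≤ 1))
    rw [mul_one] at this
    exact this
  have h3 : g' = (fun x : ℝ => 8 * x * (1 - x ^ 2) ^ 3) ∘ 
      (fun x : ℝ => ((projIcc (-1) 1 (by norm_num) x : Icc (-1:ℝ) 1) : ℝ)) := by
    ext x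
    simp only [Function.comp, g', coe_projIcc]
    split_ifs with h
    · rw [abs_le] at h
      rw [min_eq_right h.2, max_eq_right h.1]
    · rw [abs_le, not_and_or, not_le, not_le] at h
      rcases h with h | h
      · rw [min_eq_right (by linarith), max_eq_left h.le]; norm_num
      · rw [min_eq_left h.le, max_eq_right (by norm_num)]; norm_num
  rw [h3, ← lipschitzOnWith_univ]
  have := hK.comp (h2.lipschitzOnWith (s := univ)) (fun x _ => Subtype.coe_prop _)
  simpa using this

noncomputable def Th (p θ : ℝ) : ℝ := ∫ s in (0:ℝ)..θ, WW (p * sin s)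

lemma arg_lt {p : ℝ} (hp : p ∈ Ioo (0:ℝ) (√2)) (s : ℝ) : (p * sin s) ^ 2 < 2 := by
  have h1 : p ^ 2 < 2 := by
    have := pow_lt_pow_left₀ hp.2 hp.1.le (n := 2) (by norm_num)
    rwa [Real.sq_sqrt (by norm_num)] at this
  rw [mul_pow]
  nlinarith [sin_sq_le_one s, sq_nonneg p, sq_nonneg (sin s)]

lemma W_cont {p : ℝ} (hp : p ∈ Ioo (0:ℝ) (√2)) : Continuous fun s => WW (p * sin s) := by
  rw [continuous_iff_continuousAt]
  intro s
  exact ContinuousAt.comp (g := WW) (f := fun s => p * sin s) (WW_cont (arg_lt hp s))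
    (by fun_prop)

lemma Th_deriv {p : ℝ} (hp : p ∈ Ioo (0:ℝ) (√2)) (θ : ℝ) :
    HasDerivAt (Th p) (WW (p * sin θ)) θ :=
  (W_cont hp).integral_hasStrictDerivAt 0 θ |>.hasDerivAt

lemma Th_zero (p : ℝ) : Th p 0 = 0 := by simp [Th]

lemma Th_mono {p : ℝ} (hp : p ∈ Ioo (0:ℝ) (√2)) : StrictMono (Th p) :=
  strictMono_of_hasDerivAt_pos (fun θ => Th_deriv hp θ) (fun θ => WW_pos (arg_lt hp θ))

lemma Th_surj {p : ℝ} (hp : p ∈ Ioo (0:ℝ) (√2)) : Function.Surjective (Th p) := by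
  have hm : Monotone (fun θ => Th p θ - 1 / 8 * θ) := by
    have hd : ∀ θ, HasDerivAt (fun θ => Th p θ - 1 / 8 * θ) (WW (p * sin θ) - 1 / 8 * 1) θ :=
      fun θ => (Th_deriv hp θ).sub ((hasDerivAt_id θ).const_mul _)
    refine monotone_of_deriv_nonneg (fun θ => (hd θ).differentiableAt) (fun θ => ?_)
    rw [(hd θ).deriv]
    linarith [WW_ge (arg_lt hp θ)]
  have hc : Continuous (Th p) :=
    continuous_iff_continuousAt.2 fun θ => (Th_deriv hp θ).continuousAt
  apply hc.surjective
  · apply tendsto_atTop_mono' atTop (f₁ := fun θ => 1 / 8 * θ)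
    · filter_upwards [eventually_ge_atTop 0] with θ hθ
      have := hm hθ
      simp only [Th_zero] at this
      linarith
    · exact tendsto_id.const_mul_atTop (by norm_num)
  · apply tendsto_atBot_mono' atBot (f₁ := fun θ => 1 / 8 * θ)
    · filter_upwards [eventually_le_atBot 0] with θ hθ
      have := hm hθ
      simp only [Th_zero] at this
      linarith
    · exact tendsto_id.const_mul_atBot (by norm_num)

lemma Th_add {p : ℝ} (hp : p ∈ Ioo (0:ℝ) (√2)) (θ : ℝ) :
    Th p (θ + 2 * π) = Th p θ + Th p (2 * π) := by
  have hper : Function.Periodic (fun s => WW (p * sin s)) (2 * π) := by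
    intro s; simp
  have := hper.intervalIntegral_add_eq_add 0 θ
    (fun a b => (W_cont hp).intervalIntegrable a b)
  simpa [Th] using this

lemma HS_unique {q P q' P' : ℝ → ℝ} (h : IsHSSol q P) (h' : IsHSSol q' P')
    (hq : q 0 = q' 0) (hP : P 0 = P' 0) : q = q' ∧ P = P' := by
  obtain ⟨K, hK⟩ := g'_lip
  have hL : LipschitzWith (max 1 K) (fun z : ℝ × ℝ => (z.2, -(g' z.1))) := by
    have := (LipschitzWith.prod_snd (α := ℝ) (β := ℝ)).prodMk
      ((hK.comp (LipschitzWith.prod_fst (α := ℝ) (β := ℝ))).neg)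
    simpa using this
  have := ODE_solution_unique_univ (v := fun (_ : ℝ) (z : ℝ × ℝ) => (z.2, -(g' z.1)))
    (s := fun _ => univ) (K := max 1 K) (t₀ := 0)
    (f := fun t => (q t, P t)) (g := fun t => (q' t, P' t))
    (fun _ => hL.lipschitzOnWith)
    (fun t => ⟨(h.1 t).prodMk (h.2 t), mem_univ _⟩)
    (fun t => ⟨(h'.1 t).prodMk (h'.2 t), mem_univ _⟩)
    (by simp [hq, hP])
  constructor
  · ext t; exact congrArg Prod.fst (congrFun this t)
  · ext t; exact congrArg Prod.snd (congrFun this t)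

lemma sol_eq {p : ℝ} (hp : p ∈ Ioo (0:ℝ) (√2)) {q P : ℝ → ℝ} (h : IsHSSol q P)
    (hq : q 0 = 0) (hP : P 0 = p) (θ : ℝ) :
    q (Th p θ) = hh (p * sin θ) ∧ P (Th p θ) = p * cos θ := by
  let e := (Th_mono hp).orderIsoOfSurjective _ (Th_surj hp)
  have he : ∀ x, e x = Th p x := fun x => rfl
  have hes : ∀ t, Th p (e.symm t) = t := fun t => e.apply_symm_apply t
  have hse : ∀ x, e.symm (Th p x) = x := fun t => e.symm_apply_apply t
  have hd : ∀ t, HasDerivAt (fun t => e.symm t) (WW (p * sin (e.symm t)))⁻¹ t := fun t =>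
    HasDerivAt.of_local_left_inverse e.symm.continuous.continuousAt (Th_deriv hp _)
      (WW_pos (arg_lt hp _)).ne' (Eventually.of_forall hes)
  have h0 : e.symm 0 = 0 := by simpa [Th_zero] using hse 0
  have hs : IsHSSol (fun t => hh (p * sin (e.symm t))) (fun t => p * cos (e.symm t)) := by
    constructor
    · intro t
      have hW := WW_pos (arg_lt hp (e.symm t))
      have := (hh_deriv (arg_lt hp (e.symm t))).comp t (((hd t).sin).const_mul p)
      refine this.congr_deriv ?_
      field_simp
    · intro t
      have hW := WW_pos (arg_lt hp (e.symm t))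
      refine (((hd t).cos).const_mul p).congr_deriv ?_
      have := g'_hh (arg_lt hp (e.symm t))
      field_simp
      linarith
  obtain ⟨a, b⟩ := HS_unique h hs (by simp [h0, hq, hh]) (by simp [h0, hP])
  rw [a, b]
  simp [hse]

lemma period_eq {p : ℝ} (hp : p ∈ Ioo (0:ℝ) (√2)) {q P : ℝ → ℝ} (h : IsHSSol q P)
    (hq : q 0 = 0) (hP : P 0 = p) {T : ℝ} (hT : IsSmallestPeriod q T) :
    T = Th p (2 * π) := by
  have hsol := sol_eq hp h hq hP
  obtain ⟨hT0, hTp, hTm⟩ := hT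
  apply le_antisymm
  · apply hTm
    · have := Th_mono hp two_pi_pos
      rwa [Th_zero] at this
    · intro t
      obtain ⟨θ, rfl⟩ := Th_surj hp t
      rw [← Th_add hp, (hsol _).1, (hsol _).1, sin_add_two_pi]
  · obtain ⟨θ, rfl⟩ := Th_surj hp T
    have hPT : P (Th p θ) = p := by
      refine Eq.trans ?_ hP
      have h1 := h.1 (Th p θ)
      have h2 : HasDerivAt (fun t => q (t + Th p θ)) (P (Th p θ)) 0 :=
        HasDerivAt.comp_add_const 0 (Th p θ) (by simpa using h1)
      have h3 : (fun t => q (t + Th p θ)) = q := funext hTp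
      rw [h3] at h2
      exact h2.unique (h.1 0)
    rw [(hsol θ).2] at hPT
    have hc : cos θ = 1 := by
      have := hp.1
      field_simp at hPT
      linarith
    obtain ⟨n, hn⟩ := (cos_eq_one_iff θ).1 hc
    have hθ : 0 < θ := by
      rw [← Th_zero p] at hT0
      exact (Th_mono hp).lt_iff_lt.1 hT0
    apply (Th_mono hp).monotone
    rw [← hn] at hθ ⊢
    have h1 : 0 < (n:ℝ) := pos_of_mul_pos_left hθ two_pi_pos.le
    have h2 : (1:ℝ) ≤ n := by exact_mod_cast h1
    nlinarith [two_pi_pos]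

lemma Th_strictMono : StrictMonoOn (fun p => Th p (2 * π)) (Ioo 0 (√2)) := by
  intro a ha b hb hab
  have key : ∀ s, sin s ≠ 0 → WW (a * sin s) < WW (b * sin s) := by
    intro s hs
    refine WW_lt ?_ (arg_lt hb s)
    rw [mul_pow, mul_pow]
    have := pow_pos (abs_pos.2 hs) 2
    rw [sq_abs] at this
    have := pow_lt_pow_left₀ hab ha.1.le (n := 2) (by norm_num)
    gcongr
  apply intervalIntegral.integral_lt_integral_of_continuousOn_of_le_of_exists_lt two_pi_pos
    (W_cont ha).continuousOn (W_cont hb).continuousOn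
  · intro s _
    by_cases hs : sin s = 0
    · simp [hs]
    · exact (key s hs).le
  · refine ⟨π / 2, ⟨by positivity, by linarith [pi_pos]⟩, key _ (by simp)⟩

lemma Th_continuousOn : ContinuousOn (fun p => Th p (2 * π)) (Ioo 0 (√2)) := by
  rw [continuousOn_iff_continuous_domRestrict]
  apply intervalIntegral.continuous_parametric_intervalIntegral_of_continuous'
    (f := fun (p : Ioo 0 (√2)) s => WW (p.1 * sin s))
  rw [continuous_iff_continuousAt]
  rintro ⟨p, s⟩
  exact ContinuousAt.comp (g := WW) (f := fun z : Ioo 0 (√2) × ℝ => z.1.1 * sin z.2)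
    (WW_cont (arg_lt p.2 s)) (by fun_prop)

lemma Th_lower {p : ℝ} (hp : p ∈ Ioo (0:ℝ) (√2)) :
    1 / 8 * log (1 / √(1 - p ^ 2 / 2)) ≤ Th p (2 * π) := by
  have h2 : p ^ 2 < 2 := by simpa using arg_lt hp (π / 2)
  set ε := √(1 - p ^ 2 / 2) with hε
  have hε0 : 0 < ε := Real.sqrt_pos.2 (by linarith)
  have hεs : ε ^ 2 = 1 - p ^ 2 / 2 := Real.sq_sqrt (by linarith)
  have hpi := pi_pos
  have hne : ∀ s ∈ uIcc 0 (π / 2), ε + π / 2 - s ≠ 0 := by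
    intro s hs
    rw [uIcc_of_le (by positivity)] at hs
    have := hs.2
    linarith
  have hcont : ContinuousOn (fun s => 1 / 8 * (ε + π / 2 - s)⁻¹) (uIcc 0 (π / 2)) := by
    apply ContinuousOn.mul continuousOn_const
    exact ContinuousOn.inv₀ (by fun_prop) hne
  have hint : ∫ s in (0:ℝ)..(π / 2), 1 / 8 * (ε + π / 2 - s)⁻¹
      = 1 / 8 * log ((ε + π / 2) / ε) := by
    rw [intervalIntegral.integral_const_mul,
      intervalIntegral.integral_comp_sub_left (fun x => x⁻¹), integral_inv_of_pos]
    · simp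
    · linarith
    · linarith
  calc 1 / 8 * log (1 / ε) ≤ 1 / 8 * log ((ε + π / 2) / ε) := by
        gcongr
        linarith [pi_gt_three]
    _ = ∫ s in (0:ℝ)..(π / 2), 1 / 8 * (ε + π / 2 - s)⁻¹ := hint.symm
    _ ≤ Th p (π / 2) := by
        apply intervalIntegral.integral_mono_on (by positivity) hcont.intervalIntegrable
          ((W_cont hp).intervalIntegrable _ _)
        intro s hs
        refine le_trans ?_ (WW_ge2 (arg_lt hp s))
        have hc0 : 0 ≤ cos s := cos_nonneg_of_mem_Icc ⟨by linarith [hs.1], hs.2⟩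
        have hc : cos s ≤ π / 2 - s := by
          rw [← sin_pi_div_two_sub]
          exact sin_le (by linarith [hs.2])
        have hb : √(1 - (p * sin s) ^ 2 / 2) ≤ ε + π / 2 - s := by
          apply Real.sqrt_le_iff.2 ⟨by linarith, ?_⟩
          have e1 : 1 - (p * sin s) ^ 2 / 2 ≤ (ε + cos s) ^ 2 := by
            have := sin_sq_add_cos_sq s
            rw [mul_pow]
            nlinarith [mul_nonneg hε0.le hc0, sq_nonneg (cos s)]
          refine e1.trans ?_
          apply pow_le_pow_left₀ (by positivity)
          linarith
        have hpos : 0 < √(1 - (p * sin s) ^ 2 / 2) :=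
          Real.sqrt_pos.2 (by linarith [arg_lt hp s])
        rw [one_div_mul_eq_div, ← one_div, div_div, mul_comm]
        gcongr
    _ ≤ Th p (2 * π) := (Th_mono hp).monotone (by linarith)

lemma Th_tendsto : Tendsto (fun p => Th p (2 * π)) (𝓝[<] (√2)) atTop := by
  have hmem : ∀ᶠ p in 𝓝[<] (√2), p ∈ Ioo (0:ℝ) (√2) :=
    Ioo_mem_nhdsLT (by positivity)
  refine tendsto_atTop_mono' _ (hmem.mono fun p hp => Th_lower hp) ?_
  apply Tendsto.const_mul_atTop (by norm_num)
  apply tendsto_log_atTop.comp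
  simp only [one_div]
  apply Tendsto.inv_tendsto_nhdsGT_zero
  apply tendsto_nhdsWithin_iff.2 ⟨?_, ?_⟩
  · have : Continuous fun p : ℝ => √(1 - p ^ 2 / 2) := by fun_prop
    have h := this.tendsto (√2)
    simp only [Real.sq_sqrt (show (0:ℝ) ≤ 2 by norm_num)] at h
    norm_num at h
    exact h.mono_left nhdsWithin_le_nhds
  · filter_upwards [hmem] with p hp
    have h2 : p ^ 2 < 2 := by simpa using arg_lt hp (π / 2)
    exact Real.sqrt_pos.2 (by linarith)

/-- Lemma ce3 (iii), second part: the period map `𝒯 : (0, √2) → (0, +∞)` is increasing and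
continuous, and `𝒯(p₀) → +∞` as `p₀ → √2⁻`. -/
theorem stmt_6 (F : ℝ → ℝ → ℝ → ℝ × ℝ) (hF : IsHSFlow F)
    (T : ℝ → ℝ) (hT : IsPeriodMap F T) :
    StrictMonoOn T (Ioo 0 (Real.sqrt 2)) ∧
    ContinuousOn T (Ioo 0 (Real.sqrt 2)) ∧
    Tendsto T (𝓝[<] (Real.sqrt 2)) atTop := by
  have key : ∀ p ∈ Ioo (0:ℝ) (Real.sqrt 2), Th p (2 * π) = T p := by
    intro p hp
    obtain ⟨hs, h0⟩ := hF 0 p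
    exact (period_eq hp hs (by simp [h0]) (by simp [h0]) (hT p hp)).symm
  refine ⟨Th_strictMono.congr key, Th_continuousOn.congr fun p hp => (key p hp).symm,
    Th_tendsto.congr' ?_⟩
  have hmem : ∀ᶠ p in 𝓝[<] (√2), p ∈ Ioo (0:ℝ) (√2) :=
    Ioo_mem_nhdsLT (by positivity)
  exact hmem.mono key
end
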